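/- Let n ≥ 2 and let U = { x ∈ ℝⁿ : |x| < 1 } ∖ { x ∈ ℝⁿ : x_n = 0 and x_{n−1} ≤ 0 } be the open unit ball with the trace of the closed half-hyperplane { x_n = 0, x_{n−1} ≤ 0 } deleted. Then U is an inner uniform domain: there exist c ∈ (0,1) and C ∈ (1,∞) such that U is (c,C)-inner uniform. -/

import Mathlib

open Set Metric MeasureTheory ENNReal

noncomputable section

abbrev En (n : ℕ) := EuclideanSpace ℝ (Fin n)

/-- The length of the curve `γ : [0,1] → X`, defined as the supremum of sums
`∑ d(γ(t_i), γ(t_{i-1}))` over partitions `0 ≤ t₀ < … < t_k ≤ 1`. -/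
def curveLength {X : Type*} [PseudoEMetricSpace X] (γ : ℝ → X) : ℝ≥0∞ :=
  eVariationOn γ (Set.Icc 0 1)

/-- `γ` is a continuous curve in `Ω` from `x` to `y`. -/
def IsCurveIn {X : Type*} [PseudoEMetricSpace X] (Ω : Set X) (x y : X) (γ : ℝ → X) : Prop :=
  ContinuousOn γ (Set.Icc 0 1) ∧ Set.MapsTo γ (Set.Icc 0 1) Ω ∧ γ 0 = x ∧ γ 1 = y

/-- The inner (pseudo)metric of `Ω`: the infimum of lengths of continuous curves
joining `x` to `y` inside `Ω`. -/
def innerDist {X : Type*} [PseudoEMetricSpace X] (Ω : Set X) (x y : X) : ℝ≥0∞ :=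
  ⨅ (γ : ℝ → X) (_ : IsCurveIn Ω x y γ), curveLength γ

/-- `U` is a `(c,C)`-uniform domain in `ℝⁿ`. -/
def IsUniformDomain {n : ℕ} (c C : ℝ) (U : Set (En n)) : Prop :=
  IsOpen U ∧ IsConnected U ∧
    ∀ x ∈ U, ∀ y ∈ U, ∃ γ : ℝ → En n, IsCurveIn U x y γ ∧
      curveLength γ ≤ ENNReal.ofReal (C * dist x y) ∧
      ∀ t ∈ Set.Icc (0:ℝ) 1,
        c * min (dist x (γ t)) (dist (γ t) y) ≤ Metric.infDist (γ t) (frontier U)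

/-- The Laplacian `∑ ∂²f/∂xᵢ²` of `f : ℝⁿ → ℝ`. -/
def lap {n : ℕ} (f : En n → ℝ) (x : En n) : ℝ :=
  ∑ i : Fin n,
    fderiv ℝ (fun y => fderiv ℝ f y (EuclideanSpace.single i 1)) x (EuclideanSpace.single i 1)

/-- `f` is harmonic on the open set `V`: twice continuously differentiable with
vanishing Laplacian. -/
def IsHarmonicOn {n : ℕ} (f : En n → ℝ) (V : Set (En n)) : Prop :=
  ContDiffOn ℝ 2 f V ∧ ∀ x ∈ V, lap f x = 0

/-- `γ : [0,1] → Ω` is a `(c,C)`-inner uniform curve in `Ω`. -/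
def IsInnerUniformCurve {X : Type*} [PseudoEMetricSpace X] (c C : ℝ) (Ω : Set X)
    (γ : ℝ → X) : Prop :=
  ContinuousOn γ (Set.Icc 0 1) ∧ Set.MapsTo γ (Set.Icc 0 1) Ω ∧
    curveLength γ ≤ ENNReal.ofReal C * innerDist Ω (γ 0) (γ 1) ∧
    ∀ t ∈ Set.Icc (0:ℝ) 1,
      ENNReal.ofReal c * min (innerDist Ω (γ 0) (γ t)) (innerDist Ω (γ t) (γ 1)) ≤
        EMetric.infEdist (γ t) Ωᶜ

/-- `Ω` is a `(c,C)`-inner uniform domain. -/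
def IsInnerUniformDomain {X : Type*} [PseudoEMetricSpace X] (c C : ℝ) (Ω : Set X) : Prop :=
  IsOpen Ω ∧ IsConnected Ω ∧
    ∀ x ∈ Ω, ∀ y ∈ Ω, ∃ γ : ℝ → X, IsInnerUniformCurve c C Ω γ ∧ γ 0 = x ∧ γ 1 = y

/-- Angle doubling in the plane. -/
def ffold (w : ℂ) : ℂ := w * w / (‖w‖ : ℂ)

lemma ffold_norm (w : ℂ) : ‖ffold w‖ = ‖w‖ := by
  unfold ffold
  by_cases h : w = 0
  · simp [h]
  · have : ‖w‖ ≠ 0 := by simpa using h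
    simp [this]

/-- The unit direction. -/
def udir (w : ℂ) : ℂ := w / (‖w‖ : ℂ)

lemma udir_mul (w : ℂ) : (‖w‖ : ℂ) * udir w = w := by
  unfold udir
  by_cases h : w = 0
  · simp [h]
  · have : (‖w‖ : ℂ) ≠ 0 := by simpa using h
    field_simp

lemma ffold_eq (w : ℂ) : ffold w = w * udir w := by
  unfold udir ffold; ring

lemma udir_norm_le (w : ℂ) : ‖udir w‖ ≤ 1 := by
  unfold udir
  by_cases h : w = 0
  · simp [h]
  · have : ‖w‖ ≠ 0 := by simpa using h
    simp [div_self this]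

lemma udir_norm {w : ℂ} (h : w ≠ 0) : ‖udir w‖ = 1 := by
  have : ‖w‖ ≠ 0 := by simpa using h
  unfold udir
  simp [div_self this]

lemma ffold_lip (w z : ℂ) : ‖ffold w - ffold z‖ ≤ 3 * ‖w - z‖ := by
  have h1 : ffold w - ffold z = (w - z) * udir z + udir w * ((‖w‖ : ℂ) * (udir w - udir z)) := by
    rw [ffold_eq, ffold_eq]
    linear_combination (udir w - udir z) * (-udir_mul w)
  have h2 : (‖w‖ : ℂ) * (udir w - udir z) = (w - z) + ((‖z‖ - ‖w‖ : ℝ) : ℂ) * udir z := by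
    push_cast
    linear_combination udir_mul w - udir_mul z
  have h3 : ‖(‖w‖ : ℂ) * (udir w - udir z)‖ ≤ 2 * ‖w - z‖ := by
    rw [h2]
    refine (norm_add_le _ _).trans ?_
    rw [norm_mul, Complex.norm_real, Real.norm_eq_abs]
    have := abs_norm_sub_norm_le z w
    rw [norm_sub_rev] at this
    have := mul_le_of_le_one_right (abs_nonneg (‖z‖ - ‖w‖)) (udir_norm_le z)
    linarith
  rw [h1]
  refine (norm_add_le _ _).trans ?_
  rw [norm_mul, norm_mul (udir w)]
  have := mul_le_of_le_one_right (norm_nonneg (w - z)) (udir_norm_le z)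
  have := mul_le_of_le_one_left (norm_nonneg ((‖w‖ : ℂ) * (udir w - udir z))) (udir_norm_le w)
  linarith

lemma udir_sq_ge {w z : ℂ} (hw : w ≠ 0) (hz : z ≠ 0) (h : 0 ≤ w.re * z.re + w.im * z.im) :
    1 ≤ ‖udir w + udir z‖ := by
  have hw' : 0 < ‖w‖ := by simpa using hw
  have hz' : 0 < ‖z‖ := by simpa using hz
  have h1 : 0 ≤ (udir w).re * (udir z).re + (udir w).im * (udir z).im := by
    unfold udir
    rw [Complex.div_ofReal_re, Complex.div_ofReal_re, Complex.div_ofReal_im, Complex.div_ofReal_im]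
    have : w.re / ‖w‖ * (z.re / ‖z‖) + w.im / ‖w‖ * (z.im / ‖z‖) =
      (w.re * z.re + w.im * z.im) / (‖w‖ * ‖z‖) := by field_simp
    rw [this]; positivity
  have h2 := Complex.sq_norm (udir w)
  have h3 := Complex.sq_norm (udir z)
  have h4 := Complex.sq_norm (udir w + udir z)
  rw [udir_norm hw, Complex.normSq_apply] at h2
  rw [udir_norm hz, Complex.normSq_apply] at h3
  rw [Complex.normSq_apply, Complex.add_re, Complex.add_im] at h4
  nlinarith [norm_nonneg (udir w + udir z)]

lemma ffold_inv_lip {w z : ℂ} (hw : w ≠ 0) (hz : z ≠ 0) (h : 0 ≤ w.re * z.re + w.im * z.im) :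
    ‖w - z‖ ≤ 3 * ‖ffold w - ffold z‖ := by
  have hD : |‖w‖ - ‖z‖| ≤ ‖ffold w - ffold z‖ := by
    have := abs_norm_sub_norm_le (ffold w) (ffold z)
    rwa [ffold_norm, ffold_norm] at this
  have e1 : w - z = ((‖w‖ - ‖z‖ : ℝ) : ℂ) * udir z + (‖w‖ : ℂ) * (udir w - udir z) := by
    push_cast
    linear_combination udir_mul z - udir_mul w
  have e2 : (‖w‖ : ℂ) * (udir w - udir z) * (udir w + udir z) =
      (ffold w - ffold z) - ((‖w‖ - ‖z‖ : ℝ) : ℂ) * (udir z * udir z) := by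
    rw [ffold_eq, ffold_eq]; push_cast
    linear_combination udir w * udir_mul w - udir z * udir_mul z
  have n2 : ‖(‖w‖ : ℂ) * (udir w - udir z)‖ ≤ 2 * ‖ffold w - ffold z‖ := by
    have a1 := le_mul_of_one_le_right (norm_nonneg ((‖w‖ : ℂ) * (udir w - udir z)))
      (udir_sq_ge hw hz h)
    rw [← norm_mul, e2] at a1
    refine a1.trans ((norm_sub_le _ _).trans ?_)
    rw [norm_mul, norm_mul (udir z), udir_norm hz, Complex.norm_real, Real.norm_eq_abs]
    linarith
  rw [e1]
  refine (norm_add_le _ _).trans ?_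
  rw [norm_mul, udir_norm hz, Complex.norm_real, Real.norm_eq_abs]
  linarith

lemma ffold_dist_slit {w : ℂ} (hw : 0 < w.re) {r : ℝ} (hr : r ≤ 0) :
    w.re ≤ ‖ffold w - (r : ℂ)‖ := by
  have hw0 : w ≠ 0 := by rintro rfl; simp at hw
  have hn : 0 < ‖w‖ := by simpa using hw0
  have e : (ffold w - r) * (starRingEnd ℂ) (udir w) = w - r * (starRingEnd ℂ) (udir w) := by
    have : udir w * (starRingEnd ℂ) (udir w) = 1 := by
      rw [Complex.mul_conj, Complex.normSq_eq_norm_sq, udir_norm hw0]; simp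
    rw [ffold_eq]; linear_combination w * this
  have h1 : ‖ffold w - (r : ℂ)‖ = ‖w - r * (starRingEnd ℂ) (udir w)‖ := by
    rw [← e, norm_mul, RCLike.norm_conj, udir_norm hw0, mul_one]
  rw [h1]
  refine le_trans ?_ (Complex.re_le_norm _)
  rw [Complex.sub_re, Complex.re_ofReal_mul, Complex.conj_re]
  unfold udir
  rw [Complex.div_ofReal_re]
  have : 0 ≤ (-r) * (w.re / ‖w‖) := mul_nonneg (by linarith) (by positivity)
  linarith

lemma ffold_im (w : ℂ) : (ffold w).im = 2 * w.re * w.im / ‖w‖ := by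
  unfold ffold
  rw [Complex.div_ofReal_im, Complex.mul_im]; ring

/-- Surjectivity onto the slit plane. -/
lemma ffold_surj {q : ℂ} (hq : ¬ (q.im = 0 ∧ q.re ≤ 0)) : ∃ w : ℂ, 0 < w.re ∧ ffold w = q := by
  have hq0 : q ≠ 0 := by rintro rfl; simp at hq
  have hn : 0 < ‖q‖ := by simpa using hq0
  have hre : 0 < q.re + ‖q‖ := by
    have h1 := Complex.abs_re_le_norm q
    rw [abs_le] at h1
    rcases h1.1.lt_or_eq with h | h
    · linarith
    · exfalso
      have h2 := Complex.sq_norm q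
      rw [Complex.normSq_apply] at h2
      apply hq
      refine ⟨?_, by linarith⟩
      have : q.im * q.im = 0 := by rw [← h] at h2; nlinarith
      simpa using this
  -- direction q + |q| halves the angle
  set v : ℂ := q + ‖q‖ with hv
  have hvre : v.re = q.re + ‖q‖ := by simp [hv]
  have hv0 : v ≠ 0 := by intro h; rw [h] at hvre; simp at hvre; linarith
  have hvn : 0 < ‖v‖ := by simpa using hv0
  have hvv : v * v * ‖q‖ = q * (‖v‖ : ℂ) ^ 2 := by
    have a1 : (‖v‖ : ℂ) ^ 2 = v * (starRingEnd ℂ) v := by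
      rw [Complex.mul_conj, Complex.normSq_eq_norm_sq]; simp
    have a2 : (‖q‖ : ℂ) ^ 2 = q * (starRingEnd ℂ) q := by
      rw [Complex.mul_conj, Complex.normSq_eq_norm_sq]; simp
    rw [a1, hv]; simp only [map_add, Complex.conj_ofReal]
    linear_combination (q + ‖q‖) * a2
  refine ⟨((‖q‖ / ‖v‖ : ℝ) : ℂ) * v, ?_, ?_⟩
  · rw [Complex.re_ofReal_mul, hvre]; positivity
  · have hnn : ‖((‖q‖ / ‖v‖ : ℝ) : ℂ) * v‖ = ‖q‖ := by
      rw [norm_mul, Complex.norm_real, Real.norm_eq_abs, abs_of_pos (by positivity)]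
      field_simp
    unfold ffold
    rw [hnn]
    have b1 : (‖q‖ : ℂ) ≠ 0 := by exact_mod_cast hn.ne'
    have b2 : (‖v‖ : ℂ) ≠ 0 := by exact_mod_cast hvn.ne'
    push_cast
    field_simp
    linear_combination hvv

/-- Projection to the plane. -/
def plp {n : ℕ} (i j : Fin n) (x : En n) : ℂ := ⟨x i, x j⟩

lemma plp_sub {n : ℕ} (i j : Fin n) (x y : En n) : plp i j (x - y) = plp i j x - plp i j y := by
  apply Complex.ext <;> simp [plp]

lemma norm_split {n : ℕ} {i j : Fin n} (hij : i ≠ j) (x : En n) :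
    ‖x‖ ^ 2 = ‖plp i j x‖ ^ 2 + ∑ k ∈ (Finset.univ.erase i).erase j, x k ^ 2 := by
  rw [EuclideanSpace.norm_sq_eq, Complex.sq_norm, Complex.normSq_apply,
    ← Finset.add_sum_erase _ _ (Finset.mem_univ i),
    ← Finset.add_sum_erase _ _ (show j ∈ Finset.univ.erase i by simp [hij.symm])]
  simp [plp]; ring

lemma norm_plp_le {n : ℕ} {i j : Fin n} (hij : i ≠ j) (x : En n) : ‖plp i j x‖ ≤ ‖x‖ := by
  have := norm_split hij x
  have h2 : 0 ≤ ∑ k ∈ (Finset.univ.erase i).erase j, x k ^ 2 :=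
    Finset.sum_nonneg fun _ _ => sq_nonneg _
  exact (sq_le_sq₀ (norm_nonneg _) (norm_nonneg _)).1 (by linarith)

lemma norm_compare {n : ℕ} {i j : Fin n} (hij : i ≠ j) (x y : En n) {K : ℝ} (hK : 1 ≤ K)
    (h : ‖plp i j x‖ ≤ K * ‖plp i j y‖) (h2 : ∀ k, k ≠ i → k ≠ j → x k = y k) :
    ‖x‖ ≤ K * ‖y‖ := by
  have e1 := norm_split hij x
  have e2 := norm_split hij y
  have e3 : ∑ k ∈ (Finset.univ.erase i).erase j, x k ^ 2 =
      ∑ k ∈ (Finset.univ.erase i).erase j, y k ^ 2 := by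
    apply Finset.sum_congr rfl
    intro k hk
    simp at hk
    rw [h2 k hk.2 hk.1]
  have h3 : 0 ≤ ∑ k ∈ (Finset.univ.erase i).erase j, y k ^ 2 :=
    Finset.sum_nonneg fun _ _ => sq_nonneg _
  have h4 : ‖plp i j x‖ ^ 2 ≤ (K * ‖plp i j y‖) ^ 2 := by gcongr
  refine (sq_le_sq₀ (norm_nonneg _) (by positivity)).1 ?_
  rw [mul_pow] at *
  rw [e1, e2, e3, mul_add]
  have : (1 : ℝ) ≤ K ^ 2 := by nlinarith
  nlinarith

/-- Replace the plane coordinates. -/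
def repl {n : ℕ} (i j : Fin n) (x : En n) (w : ℂ) : En n :=
  WithLp.toLp 2 fun k => if k = i then w.re else if k = j then w.im else x k

lemma plp_repl {n : ℕ} {i j : Fin n} (hij : i ≠ j) (x : En n) (w : ℂ) :
    plp i j (repl i j x w) = w := by
  apply Complex.ext <;> simp [plp, repl, hij.symm]

lemma repl_other {n : ℕ} {i j : Fin n} (x : En n) (w : ℂ) (k : Fin n) (h1 : k ≠ i) (h2 : k ≠ j) :
    repl i j x w k = x k := by
  simp [repl, h1, h2]

lemma ext_plp {n : ℕ} {i j : Fin n} {x y : En n} (h : plp i j x = plp i j y)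
    (h2 : ∀ k, k ≠ i → k ≠ j → x k = y k) : x = y := by
  ext k
  by_cases hi : k = i
  · subst hi; exact congrArg Complex.re h
  by_cases hj : k = j
  · subst hj; exact congrArg Complex.im h
  exact h2 k hi hj

/-- Angle doubling in space. -/
def FF {n : ℕ} (i j : Fin n) (x : En n) : En n := repl i j x (ffold (plp i j x))

lemma plp_FF {n : ℕ} {i j : Fin n} (hij : i ≠ j) (x : En n) :
    plp i j (FF i j x) = ffold (plp i j x) := plp_repl hij _ _

lemma norm_FF {n : ℕ} {i j : Fin n} (hij : i ≠ j) (x : En n) : ‖FF i j x‖ = ‖x‖ := by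
  have h := ffold_norm (plp i j x)
  apply le_antisymm
  · have := norm_compare hij (FF i j x) x le_rfl (by rw [plp_FF hij, h, one_mul])
      (fun k h1 h2 => repl_other _ _ k h1 h2)
    linarith
  · have := norm_compare hij x (FF i j x) le_rfl (by rw [plp_FF hij, h, one_mul])
      (fun k h1 h2 => (repl_other _ _ k h1 h2).symm)
    linarith

lemma FF_lip {n : ℕ} {i j : Fin n} (hij : i ≠ j) (x y : En n) :
    ‖FF i j x - FF i j y‖ ≤ 3 * ‖x - y‖ := by
  apply norm_compare hij _ _ (by norm_num)
  · rw [plp_sub, plp_sub, plp_FF hij, plp_FF hij]; exact ffold_lip _ _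
  · intro k h1 h2
    simp [FF, repl, h1, h2]

lemma FF_inv_lip {n : ℕ} {i j : Fin n} (hij : i ≠ j) {x y : En n} (hx : 0 < x i) (hy : 0 < y i)
    (h : 0 ≤ x j * y j) :
    ‖x - y‖ ≤ 3 * ‖FF i j x - FF i j y‖ := by
  apply norm_compare hij _ _ (by norm_num)
  · rw [plp_sub, plp_sub, plp_FF hij, plp_FF hij]
    apply ffold_inv_lip
    · intro h; have := congrArg Complex.re h; simp [plp] at this; linarith
    · intro h; have := congrArg Complex.re h; simp [plp] at this; linarith
    · simp [plp]; nlinarith [mul_pos hx hy]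
  · intro k h1 h2
    simp [FF, repl, h1, h2]

/-- The slit ball. -/
def UU {n : ℕ} (i j : Fin n) : Set (En n) :=
  Metric.ball (0 : En n) 1 \ {x : En n | x j = 0 ∧ x i ≤ 0}

/-- The half ball. -/
def HH {n : ℕ} (i : Fin n) : Set (En n) := {x | ‖x‖ < 1 ∧ 0 < x i}

lemma dist_compl {n : ℕ} {i j : Fin n} (hij : i ≠ j) {p v : En n} (hp : p ∈ HH i)
    (hv : v ∉ UU i j) : min (1 - ‖p‖) (p i) ≤ ‖FF i j p - v‖ := by
  by_cases h : ‖v‖ < 1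
  · have hv' : v j = 0 ∧ v i ≤ 0 := by
      by_contra hh
      exact hv ⟨by simpa using h, hh⟩
    refine (min_le_right _ _).trans (le_trans ?_ (norm_plp_le hij _))
    rw [plp_sub, plp_FF hij]
    have : plp i j v = ((v i : ℝ) : ℂ) := by apply Complex.ext <;> simp [plp, hv'.1]
    rw [this]
    exact ffold_dist_slit (w := plp i j p) hp.2 hv'.2
  · refine (min_le_left _ _).trans ?_
    have := norm_sub_norm_le v (FF i j p)
    rw [norm_FF hij, norm_sub_rev] at this
    linarith

lemma FF_mem {n : ℕ} {i j : Fin n} (hij : i ≠ j) {p : En n} (hp : p ∈ HH i) : FF i j p ∈ UU i j := by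
  by_contra h
  have := dist_compl hij hp h
  rw [sub_self, norm_zero] at this
  have : 0 < min (1 - ‖p‖) (p i) := lt_min (by linarith [hp.1]) hp.2
  linarith

lemma FF_surj {n : ℕ} {i j : Fin n} (hij : i ≠ j) {q : En n} (hq : q ∈ UU i j) :
    ∃ p ∈ HH i, FF i j p = q := by
  obtain ⟨w, hw, hwq⟩ := ffold_surj (q := plp i j q) hq.2
  have e : FF i j (repl i j q w) = q := by
    apply ext_plp
    · rw [plp_FF hij, plp_repl hij, hwq]
    · intro k h1 h2
      simp [FF, repl, h1, h2]
  refine ⟨repl i j q w, ⟨?_, ?_⟩, e⟩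
  · rw [← norm_FF hij, e]; simpa using hq.1
  · have := congrArg Complex.re (plp_repl hij q w)
    simp [plp] at this
    rwa [this]

lemma FF_j {n : ℕ} {i j : Fin n} (hij : i ≠ j) (p : En n) :
    FF i j p j = 2 * p i * p j / ‖plp i j p‖ := by
  have := congrArg Complex.im (plp_FF hij p)
  rw [ffold_im] at this
  simpa [plp] using this

lemma FF_j_pos {n : ℕ} {i j : Fin n} (hij : i ≠ j) {p : En n} (hp : 0 < p i) :
    ∃ r : ℝ, 0 < r ∧ FF i j p j = r * p j := by
  refine ⟨2 * p i / ‖plp i j p‖, ?_, by rw [FF_j hij]; ring⟩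
  have : plp i j p ≠ 0 := by
    intro h; have := congrArg Complex.re h; simp [plp] at this; linarith
  have : 0 < ‖plp i j p‖ := by simpa using this
  positivity

lemma UU_open {n : ℕ} (i j : Fin n) : IsOpen (UU i j) := by
  apply Metric.isOpen_ball.sdiff
  have h1 : IsClosed {x : En n | x j = 0} := isClosed_eq (by fun_prop) (by fun_prop)
  have h2 : IsClosed {x : En n | x i ≤ 0} := isClosed_le (by fun_prop) (by fun_prop)
  exact h1.inter h2

lemma HH_convex {n : ℕ} (i : Fin n) : Convex ℝ (HH i) := by
  have : HH i = Metric.ball (0 : En n) 1 ∩ {x | 0 < x i} := by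
    ext x; simp [HH]
  rw [this]
  refine (convex_ball _ _).inter ?_
  intro x hx y hy a b ha hb hab
  simp at *
  rcases ha.lt_or_eq with h | h
  · have := mul_pos h hx
    have := mul_nonneg hb hy.le
    linarith
  · subst h; simp at hab; subst hab; simpa using hy

lemma FF_lipschitz {n : ℕ} {i j : Fin n} (hij : i ≠ j) : LipschitzWith 3 (FF i j) := by
  apply LipschitzWith.of_dist_le_mul
  intro x y
  rw [dist_eq_norm, dist_eq_norm]
  exact FF_lip hij x y

lemma oo_mem {n : ℕ} (i : Fin n) : (EuclideanSpace.single i (1/2 : ℝ)) ∈ HH i := by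
  refine ⟨?_, by simp⟩
  simp; norm_num

lemma UU_conn {n : ℕ} {i j : Fin n} (hij : i ≠ j) : IsConnected (UU i j) := by
  have : UU i j = FF i j '' HH i := by
    ext q; constructor
    · intro hq; exact FF_surj hij hq
    · rintro ⟨p, hp, rfl⟩; exact FF_mem hij hp
  rw [this]
  exact ((HH_convex i).isConnected ⟨_, oo_mem i⟩).image _ (FF_lipschitz hij).continuous.continuousOn

lemma innerDist_ge {n : ℕ} {i j : Fin n} (hij : i ≠ j) {p q : En n} (hp : p ∈ HH i) (hq : q ∈ HH i) :
    ENNReal.ofReal ‖p - q‖ ≤ 3 * innerDist (UU i j) (FF i j p) (FF i j q) := by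
  have key : ∀ γ, IsCurveIn (UU i j) (FF i j p) (FF i j q) γ →
      ENNReal.ofReal ‖p - q‖ ≤ 3 * curveLength γ := by
    rintro γ ⟨hc, hm, h0, h1⟩
    have em : ∀ {a b : En n}, 0 < a i → 0 < b i → 0 ≤ a j * b j →
        ENNReal.ofReal ‖a - b‖ ≤ 3 * edist (FF i j a) (FF i j b) := by
      intro a b ha hb hab
      rw [edist_dist, dist_eq_norm]
      refine (ENNReal.ofReal_le_ofReal (FF_inv_lip hij ha hb hab)).trans ?_
      rw [ENNReal.ofReal_mul (by norm_num)]
      simp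
    by_cases hs : 0 ≤ p j * q j
    · refine (em hp.2 hq.2 hs).trans ?_
      gcongr
      rw [← h0, ← h1]
      exact eVariationOn.edist_le γ (by simp) (by simp)
    · push Not at hs
      obtain ⟨r1, hr1, e1⟩ := FF_j_pos hij hp.2
      obtain ⟨r2, hr2, e2⟩ := FF_j_pos hij hq.2
      have hg : ContinuousOn (fun t => γ t j) (Set.Icc 0 1) := by fun_prop
      have : ∃ t ∈ Set.Icc (0:ℝ) 1, γ t j = 0 := by
        have hpre := (isPreconnected_Icc (a := (0:ℝ)) (b := 1)).image _ hg
        have m0 : γ 0 j ∈ (fun t => γ t j) '' Set.Icc (0:ℝ) 1 := ⟨0, by simp, rfl⟩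
        have m1 : γ 1 j ∈ (fun t => γ t j) '' Set.Icc (0:ℝ) 1 := ⟨1, by simp, rfl⟩
        rcases mul_neg_iff.1 hs with ⟨a, b⟩ | ⟨a, b⟩
        · exact hpre.Icc_subset m1 m0 ⟨by rw [h1, e2]; exact (mul_neg_of_pos_of_neg hr2 b).le, by rw [h0, e1]; positivity⟩
        · exact hpre.Icc_subset m0 m1 ⟨by rw [h0, e1]; exact (mul_neg_of_pos_of_neg hr1 a).le, by rw [h1, e2]; positivity⟩
      obtain ⟨t, ht, htj⟩ := this
      obtain ⟨z, hz, hze⟩ := FF_surj hij (hm ht)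
      obtain ⟨r3, hr3, e3⟩ := FF_j_pos hij hz.2
      have hzj : z j = 0 := by
        rw [hze, htj] at e3
        rcases mul_eq_zero.1 e3.symm with h | h
        · exact absurd h hr3.ne'
        · exact h
      have k1 := em hp.2 hz.2 (by rw [hzj]; simp)
      have k2 := em hz.2 hq.2 (by rw [hzj]; simp)
      rw [hze, ← h0] at k1
      rw [hze, ← h1] at k2
      have l1 : edist (γ 0) (γ t) + edist (γ t) (γ 1) ≤ curveLength γ := by
        unfold curveLength
        have hh := eVariationOn.add_le_union γ (s := Set.Icc 0 t) (t := Set.Icc t 1)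
          (fun x hx y hy => hx.2.trans hy.1)
        rw [Set.Icc_union_Icc_eq_Icc ht.1 ht.2] at hh
        refine le_trans ?_ hh
        gcongr
        · exact eVariationOn.edist_le γ (by simp [ht.1]) (by simp [ht.1])
        · exact eVariationOn.edist_le γ (by simp [ht.2]) (by simp [ht.2])
      calc ENNReal.ofReal ‖p - q‖ ≤ ENNReal.ofReal (‖p - z‖ + ‖z - q‖) := by
            apply ENNReal.ofReal_le_ofReal
            have := norm_add_le (p - z) (z - q)
            simpa using this
        _ = ENNReal.ofReal ‖p - z‖ + ENNReal.ofReal ‖z - q‖ :=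
            ENNReal.ofReal_add (norm_nonneg _) (norm_nonneg _)
        _ ≤ 3 * edist (γ 0) (γ t) + 3 * edist (γ t) (γ 1) := add_le_add k1 k2
        _ = 3 * (edist (γ 0) (γ t) + edist (γ t) (γ 1)) := by ring
        _ ≤ _ := by gcongr
  unfold innerDist
  rw [ENNReal.mul_iInf_of_ne (by norm_num) (by norm_num)]
  refine le_iInf fun γ => ?_
  rw [ENNReal.mul_iInf_of_ne (by norm_num) (by norm_num)]
  exact le_iInf fun h => key γ h

lemma curveLength_le {n : ℕ} {g : ℝ → En n} {K : ℝ} (hK : 0 ≤ K)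
    (h : ∀ s ∈ Set.Icc (0:ℝ) 1, ∀ t ∈ Set.Icc (0:ℝ) 1, ‖g s - g t‖ ≤ K * |s - t|) :
    ContinuousOn g (Set.Icc 0 1) ∧ curveLength g ≤ ENNReal.ofReal K := by
  have hl : LipschitzOnWith K.toNNReal g (Set.Icc 0 1) := by
    apply LipschitzOnWith.of_dist_le_mul
    intro s hs t ht
    rw [dist_eq_norm, Real.coe_toNNReal _ hK, Real.dist_eq]
    exact h s hs t ht
  refine ⟨hl.continuousOn, ?_⟩
  have h1 := hl.comp_eVariationOn_le (g := (id : ℝ → ℝ)) (s := Set.Icc 0 1) (fun x hx => hx)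
  have h2 : eVariationOn (id : ℝ → ℝ) (Set.Icc 0 1) ≤ 1 := by
    have := (monotone_id.monotoneOn (Set.Icc (0:ℝ) 1)).eVariationOn_le (a := 0) (b := 1) (by simp) (by simp)
    simpa using this
  unfold curveLength
  calc eVariationOn g (Set.Icc 0 1) ≤ K.toNNReal * eVariationOn (id : ℝ → ℝ) (Set.Icc 0 1) := h1
    _ ≤ K.toNNReal * 1 := by gcongr
    _ = _ := by rw [mul_one]; rfl

lemma innerDist_sub {n : ℕ} {U : Set (En n)} {g : ℝ → En n} {K : ℝ} (hK : 0 ≤ K)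
    (h : ∀ s ∈ Set.Icc (0:ℝ) 1, ∀ t ∈ Set.Icc (0:ℝ) 1, ‖g s - g t‖ ≤ K * |s - t|)
    (hm : Set.MapsTo g (Set.Icc 0 1) U) {a b : ℝ} (ha : 0 ≤ a) (hab : a ≤ b) (hb : b ≤ 1) :
    innerDist U (g a) (g b) ≤ ENNReal.ofReal (K * (b - a)) := by
  have hin : ∀ s ∈ Set.Icc (0:ℝ) 1, a + (b - a) * s ∈ Set.Icc (0:ℝ) 1 := by
    intro s hs
    have h1 : 0 ≤ b - a := by linarith
    have := mul_nonneg h1 hs.1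
    have := mul_le_of_le_one_right h1 hs.2
    exact ⟨by linarith, by linarith⟩
  obtain ⟨c1, c2⟩ := curveLength_le (g := fun s => g (a + (b - a) * s)) (K := K * (b - a))
    (mul_nonneg hK (by linarith)) (by
      intro s hs t ht
      refine (h _ (hin s hs) _ (hin t ht)).trans (le_of_eq ?_)
      rw [show a + (b - a) * s - (a + (b - a) * t) = (b - a) * (s - t) by ring, abs_mul,
        abs_of_nonneg (by linarith : 0 ≤ b - a)]
      ring)
  refine le_trans (iInf₂_le _ ⟨c1, fun s hs => hm (hin s hs), ?_, ?_⟩) c2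
  · simp
  · simp

/-- The model curve in the half ball. -/
def arc {n : ℕ} (o p q : En n) (t : ℝ) : En n :=
  (1 - ‖p - q‖ * t * (1 - t)) • ((1 - t) • p + t • q) + (‖p - q‖ * t * (1 - t)) • o

lemma arc_lip {n : ℕ} {o p q : En n} (ho : ‖o‖ ≤ 1) (hp : ‖p‖ < 1) (hq : ‖q‖ < 1)
    (s : ℝ) (hs : s ∈ Set.Icc (0:ℝ) 1) (t : ℝ) (ht : t ∈ Set.Icc (0:ℝ) 1) :
    ‖arc o p q s - arc o p q t‖ ≤ 4 * ‖p - q‖ * |s - t| := by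
  set l := ‖p - q‖ with hl
  have hl0 : 0 ≤ l := norm_nonneg _
  have hl2 : l ≤ 2 := by have := norm_sub_le p q; linarith
  have e : arc o p q s - arc o p q t =
      ((s - t) * (1 - l * s * (1 - s))) • (q - p) +
        (l * ((s - t) * (1 - s - t))) • (o - ((1 - t) • p + t • q)) := by
    unfold arc
    rw [← hl]
    module
  have hm : ‖(1 - t) • p + t • q‖ ≤ 1 := by
    refine (norm_add_le _ _).trans ?_
    rw [norm_smul, norm_smul, Real.norm_of_nonneg ht.1, Real.norm_of_nonneg (by linarith [ht.2])]
    nlinarith [ht.1, ht.2]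
  have hom : ‖o - ((1 - t) • p + t • q)‖ ≤ 2 := (norm_sub_le _ _).trans (by linarith)
  have b1 : |1 - l * s * (1 - s)| ≤ 1 := by
    have : 0 ≤ s * (1 - s) := mul_nonneg hs.1 (by linarith [hs.2])
    have h4 : s * (1 - s) ≤ 1 / 4 := by nlinarith [sq_nonneg (s - 1/2)]
    rw [abs_le]; constructor <;> nlinarith
  have b2 : |1 - s - t| ≤ 1 := by rw [abs_le]; constructor <;> linarith [hs.1, hs.2, ht.1, ht.2]
  rw [e]
  refine (norm_add_le _ _).trans ?_
  rw [norm_smul, norm_smul, norm_sub_rev q p, ← hl, Real.norm_eq_abs, Real.norm_eq_abs, abs_mul,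
    abs_mul, abs_mul, abs_of_nonneg hl0]
  have c1 : |s - t| * |1 - l * s * (1 - s)| * l ≤ |s - t| * 1 * l := by gcongr
  have c2 : l * (|s - t| * |1 - s - t|) * ‖o - ((1 - t) • p + t • q)‖ ≤ l * (|s - t| * 1) * 2 := by
    gcongr
  have : 0 ≤ l * |s - t| := by positivity
  linarith

lemma arc_deep {n : ℕ} {i : Fin n} {p q : En n} (hp : p ∈ HH i) (hq : q ∈ HH i)
    (t : ℝ) (ht : t ∈ Set.Icc (0:ℝ) 1) :
    arc (EuclideanSpace.single i (1/2 : ℝ)) p q t ∈ HH i ∧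
    ‖p - q‖ * t * (1 - t) / 2 ≤ 1 - ‖arc (EuclideanSpace.single i (1/2 : ℝ)) p q t‖ ∧
    ‖p - q‖ * t * (1 - t) / 2 ≤ arc (EuclideanSpace.single i (1/2 : ℝ)) p q t i := by
  have hl2 : ‖p - q‖ ≤ 2 := by have := norm_sub_le p q; linarith [hp.1, hq.1]
  have ht1 : 0 ≤ 1 - t := by linarith [ht.2]
  have hmm : (1 - t) • p + t • q ∈ HH i := HH_convex i hp hq ht1 ht.1 (by ring)
  have h0 : 0 ≤ ‖p - q‖ * t * (1 - t) :=
    mul_nonneg (mul_nonneg (norm_nonneg _) ht.1) ht1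
  have h1 : ‖p - q‖ * t * (1 - t) ≤ 1 := by
    have : 0 ≤ t * (1 - t) := mul_nonneg ht.1 ht1
    have h4 : t * (1 - t) ≤ 1 / 4 := by nlinarith [sq_nonneg (t - 1/2)]
    nlinarith
  unfold arc
  generalize ‖p - q‖ * t * (1 - t) = μ at *
  generalize (1 - t) • p + t • q = m at *
  refine ⟨HH_convex i hmm (oo_mem i) (by linarith) h0 (by ring), ?_, ?_⟩
  · have := norm_add_le ((1 - μ) • m) (μ • (EuclideanSpace.single i (1/2 : ℝ)))
    rw [norm_smul, norm_smul, Real.norm_of_nonneg h0, Real.norm_of_nonneg (by linarith)] at this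
    have e : ‖(EuclideanSpace.single i (1/2 : ℝ) : En n)‖ = 1/2 := by simp
    rw [e] at this
    nlinarith [hmm.1]
  · simp
    nlinarith [hmm.2]

lemma arc_zero {n : ℕ} (o p q : En n) : arc o p q 0 = p := by simp [arc]

lemma arc_one {n : ℕ} (o p q : En n) : arc o p q 1 = q := by simp [arc]

lemma UU_curve {n : ℕ} {i j : Fin n} (hij : i ≠ j) {p q : En n} (hp : p ∈ HH i) (hq : q ∈ HH i) :
    IsInnerUniformCurve (1/48) 36 (UU i j)
      (fun t => FF i j (arc (EuclideanSpace.single i (1/2 : ℝ)) p q t)) := by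
  set o : En n := EuclideanSpace.single i (1/2 : ℝ) with ho
  have hl : ∀ s ∈ Set.Icc (0:ℝ) 1, ∀ t ∈ Set.Icc (0:ℝ) 1,
      ‖FF i j (arc o p q s) - FF i j (arc o p q t)‖ ≤ (12 * ‖p - q‖) * |s - t| := by
    intro s hs t ht
    have := FF_lip hij (arc o p q s) (arc o p q t)
    have := arc_lip (oo_mem i).1.le hp.1 hq.1 s hs t ht
    linarith
  have hK : 0 ≤ 12 * ‖p - q‖ := by positivity
  have hm : Set.MapsTo (fun t => FF i j (arc o p q t)) (Set.Icc 0 1) (UU i j) :=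
    fun t ht => FF_mem hij (arc_deep hp hq t ht).1
  obtain ⟨c1, c2⟩ := curveLength_le hK hl
  refine ⟨c1, hm, ?_, ?_⟩
  · refine c2.trans ?_
    simp only [arc_zero, arc_one]
    rw [ENNReal.ofReal_mul (by norm_num)]
    refine (mul_le_mul_right (innerDist_ge hij hp hq) _).trans (le_of_eq ?_)
    rw [← mul_assoc]
    congr 1
    norm_num
  · intro t ht
    have d1 := innerDist_sub hK hl hm le_rfl ht.1 ht.2
    have d2 := innerDist_sub hK hl hm ht.1 ht.2 le_rfl
    refine (mul_le_mul_right (min_le_min d1 d2) _).trans ?_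
    rw [← ENNReal.ofReal_min, ← ENNReal.ofReal_mul (by norm_num)]
    refine Metric.le_infEDist.2 ?_
    intro v hv
    rw [edist_dist, dist_eq_norm]
    apply ENNReal.ofReal_le_ofReal
    obtain ⟨a1, a2, a3⟩ := arc_deep hp hq t ht
    refine le_trans ?_ (dist_compl hij a1 hv)
    refine le_trans ?_ (le_min a2 a3)
    have hn := norm_nonneg (p - q)
    rcases le_total t (1/2) with h | h
    · have := min_le_left (12 * ‖p - q‖ * (t - 0)) (12 * ‖p - q‖ * (1 - t))
      have : 0 ≤ ‖p - q‖ * t * (1 - t - 1/2) := mul_nonneg (mul_nonneg hn ht.1) (by linarith)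
      nlinarith
    · have := min_le_right (12 * ‖p - q‖ * (t - 0)) (12 * ‖p - q‖ * (1 - t))
      have : 0 ≤ ‖p - q‖ * (1 - t) * (t - 1/2) :=
        mul_nonneg (mul_nonneg hn (by linarith [ht.2])) (by linarith)
      nlinarith

/-- The open unit ball in `ℝⁿ`, `n ≥ 2`, with the trace of the closed half-hyperplane
`{x_n = 0, x_{n−1} ≤ 0}` removed, is an inner uniform domain. -/
theorem statement12 (n : ℕ) (hn : 2 ≤ n) :
    ∃ c ∈ Set.Ioo (0:ℝ) 1, ∃ C : ℝ, 1 < C ∧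
      IsInnerUniformDomain c C
        (Metric.ball (0 : En n) 1 \
          {x : En n | x ⟨n - 1, by omega⟩ = 0 ∧ x ⟨n - 2, by omega⟩ ≤ 0}) := by
  have hij : (⟨n - 2, by omega⟩ : Fin n) ≠ ⟨n - 1, by omega⟩ := by
    intro h
    have := congrArg Fin.val h
    simp at this
    omega
  refine ⟨1/48, by norm_num, 36, by norm_num, UU_open _ _, UU_conn hij, ?_⟩
  intro x hx y hy
  obtain ⟨p, hp, rfl⟩ := FF_surj hij hx
  obtain ⟨q, hq, rfl⟩ := FF_surj hij hy
  exact ⟨_, UU_curve hij hp hq, by simp only [arc_zero], by simp only [arc_one]⟩
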